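/- Consider the first-order analytic system ∂u/∂x1 = f(x1,x2,u), ∂u/∂x2 = g(x1,x2,u), where f, g are analytic near (0,0,0) and satisfy the compatibility condition D₂f = D₁g with D₁ = ∂/∂x1 + f·∂/∂u, D₂ = ∂/∂x2 + g·∂/∂u. Then there exists a unique function u(x1,x2) analytic near (0,0) with u(0,0) = 0 solving the system. -/

import Mathlib

noncomputable def d1 (f : ℝ → ℝ → ℝ) : ℝ → ℝ → ℝ := fun x y => deriv (fun t => f t y) x
noncomputable def d2 (f : ℝ → ℝ → ℝ) : ℝ → ℝ → ℝ := fun x y => deriv (fun t => f x t) y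

noncomputable def D1 (h : ℝ → ℝ → ℝ → ℝ) : ℝ → ℝ → ℝ → ℝ :=
  fun x y u => deriv (fun t => h t y u) x
noncomputable def D2 (h : ℝ → ℝ → ℝ → ℝ) : ℝ → ℝ → ℝ → ℝ :=
  fun x y u => deriv (fun t => h x t u) y
noncomputable def Du (h : ℝ → ℝ → ℝ → ℝ) : ℝ → ℝ → ℝ → ℝ :=
  fun x y u => deriv (fun t => h x y t) u

open Set Filter Topology unitInterval
open scoped ContDiff

theorem ContinuousMap.update_apply {ι X E : Type*} [TopologicalSpace X] [TopologicalSpace E]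
    [DecidableEq ι] (c : ι → C(X, E)) (i : ι) (d : C(X, E)) (x : X) :
    (fun j => Function.update c i d j x) = Function.update (fun j => c j x) i (d x) := by
  ext j
  rcases eq_or_ne j i with rfl | hj <;> simp [*]

section Superposition

variable {X E F : Type*} [TopologicalSpace X] [CompactSpace X]
  [NormedAddCommGroup E] [NormedSpace ℝ E] [NormedAddCommGroup F] [NormedSpace ℝ F]

/-- The pointwise extension of a continuous multilinear map to spaces of continuous functions. -/
noncomputable def ContinuousMultilinearMap.pointwise {n : ℕ}
    (m : ContinuousMultilinearMap ℝ (fun _ : Fin n => E) F) :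
    ContinuousMultilinearMap ℝ (fun _ : Fin n => C(X, E)) C(X, F) :=
  MultilinearMap.mkContinuous
    { toFun := fun c => ⟨fun x => m fun i => c i x, by fun_prop⟩
      map_update_add' := by
        intro _ c i a b
        ext x
        simp [ContinuousMap.update_apply]
      map_update_smul' := by
        intro _ c i a b
        ext x
        simp [ContinuousMap.update_apply] } ‖m‖ (by
      intro c
      refine (ContinuousMap.norm_le _ (by positivity)).2 fun x => ?_
      refine (m.le_opNorm _).trans ?_
      gcongr with i
      exact (c i).norm_coe_le_norm x)

@[simp]
theorem ContinuousMultilinearMap.pointwise_apply {n : ℕ}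
    (m : ContinuousMultilinearMap ℝ (fun _ : Fin n => E) F) (c : Fin n → C(X, E)) (x : X) :
    m.pointwise c x = m fun i => c i x := rfl

theorem ContinuousMultilinearMap.norm_pointwise_le {n : ℕ}
    (m : ContinuousMultilinearMap ℝ (fun _ : Fin n => E) F) :
    ‖(m.pointwise : ContinuousMultilinearMap ℝ (fun _ : Fin n => C(X, E)) C(X, F))‖ ≤ ‖m‖ :=
  MultilinearMap.mkContinuous_norm_le _ (norm_nonneg _) _

/-- Composition with a function analytic at `0` is an analytic operation on continuous functions
of small norm. -/
theorem AnalyticAt.exists_analyticAt_superposition [CompleteSpace F] {f : E → F}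
    (hf : AnalyticAt ℝ f 0) :
    ∃ N : C(X, E) → C(X, F), AnalyticAt ℝ N 0 ∧
      ∀ᶠ c in 𝓝 (0 : C(X, E)), ∀ x, N c x = f (c x) := by
  obtain ⟨p, r, hp⟩ := hf
  let P : FormalMultilinearSeries ℝ C(X, E) C(X, F) := fun n => (p n).pointwise
  have hrad : p.radius ≤ P.radius :=
    FormalMultilinearSeries.radius_le_of_le fun n => (p n).norm_pointwise_le
  have hr : r ≤ P.radius := hp.r_le.trans hrad
  have hP := P.hasFPowerSeriesOnBall (hp.r_pos.trans_le hr)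
  refine ⟨P.sum, hP.analyticAt, ?_⟩
  filter_upwards [Metric.eball_mem_nhds (0 : C(X, E)) hp.r_pos] with c hc x
  have h1 := hP.hasSum (Metric.eball_subset_eball hr hc)
  have h2 := h1.mapL (ContinuousMap.evalCLM ℝ x)
  have hx : c x ∈ Metric.eball (0 : E) r := by
    rw [mem_eball_zero_iff] at hc ⊢
    refine lt_of_le_of_lt ?_ hc
    exact_mod_cast enorm_le_iff_norm_le.2 (c.norm_coe_le_norm x)
  have h3 := hp.hasSum hx
  rw [zero_add] at h2 h3
  exact h2.unique h3

end Superposition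

section TotalDifferential
variable {E F : Type*} [NormedAddCommGroup E] [NormedSpace ℝ E]
  [NormedAddCommGroup F] [NormedSpace ℝ F]

/-- The primitive vanishing at `0`, as an operator on continuous functions on `[0, 1]`. -/
noncomputable def primitiveCLM : C(I, F) →L[ℝ] C(I, F) :=
  LinearMap.mkContinuous
    { toFun := fun c => ⟨fun t => ∫ s in (0 : ℝ)..t, IccExtend zero_le_one c s, by
        have h : Continuous (IccExtend zero_le_one c) := c.continuous.Icc_extend'
        exact (intervalIntegral.continuous_primitive (fun _ _ => h.intervalIntegrable _ _) 0).comp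
          continuous_subtype_val⟩
      map_add' := by
        intro a b
        ext t
        exact intervalIntegral.integral_add (a.continuous.Icc_extend'.intervalIntegrable _ _)
          (b.continuous.Icc_extend'.intervalIntegrable _ _)
      map_smul' := by
        intro r a
        ext t
        exact intervalIntegral.integral_smul r _ } 1 (by
      intro c
      rw [one_mul]
      refine (ContinuousMap.norm_le _ (by positivity)).2 fun t => ?_
      refine (intervalIntegral.norm_integral_le_of_norm_le_const
        (C := ‖c‖) fun s _ => c.norm_coe_le_norm _).trans ?_
      rw [sub_zero, abs_of_nonneg t.2.1]
      exact mul_le_of_le_one_right (norm_nonneg _) t.2.2)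

@[simp]
theorem primitiveCLM_apply (c : C(I, F)) (t : I) :
    primitiveCLM c t = ∫ s in (0 : ℝ)..t, IccExtend zero_le_one c s := rfl

/-- The curve `t ↦ (q, t • q, c t)`, depending linearly on `(q, c)`. -/
noncomputable def rayCLM : E × C(I, F) →L[ℝ] C(I, E × E × F) :=
  LinearMap.mkContinuous
    { toFun := fun w => ⟨fun t => (w.1, (t : ℝ) • w.1, w.2 t), by fun_prop⟩
      map_add' := by intro a b; ext t <;> simp
      map_smul' := by intro r a; ext t <;> simp [smul_comm r] } 1 (by
      intro w
      rw [one_mul]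
      refine (ContinuousMap.norm_le _ (by positivity)).2 fun t => ?_
      refine norm_prod_le_iff.2 ⟨norm_fst_le w, norm_prod_le_iff.2 ⟨?_, ?_⟩⟩
      · refine (norm_smul_le _ _).trans ?_
        rw [Real.norm_of_nonneg t.2.1]
        exact (mul_le_of_le_one_left (norm_nonneg _) t.2.2).trans (norm_fst_le w)
      · exact (w.2.norm_coe_le_norm t).trans (norm_snd_le w))

@[simp]
theorem rayCLM_apply (w : E × C(I, F)) (t : I) :
    rayCLM w t = (w.1, (t : ℝ) • w.1, w.2 t) := rfl

variable [CompleteSpace F]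

/-- A radial solution of a completely integrable total differential equation `du = η (q, u)` solves
the full equation. -/
theorem eventually_fderiv_eq_of_radial {η : E × F → E →L[ℝ] F} (hη : AnalyticAt ℝ η 0)
    (hsymm : ∀ᶠ z in 𝓝 (0 : E × F), ∀ v w,
      fderiv ℝ η z (v, η z v) w = fderiv ℝ η z (w, η z w) v)
    {u : E → F} (hu : AnalyticAt ℝ u 0) (hu0 : u 0 = 0)
    (hrad : ∀ᶠ q in 𝓝 (0 : E), fderiv ℝ u q q = η (q, u q) q) :
    ∀ᶠ q in 𝓝 (0 : E), fderiv ℝ u q = η (q, u q) := by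
  have hgraph : Tendsto (fun q => (q, u q)) (𝓝 0) (𝓝 (0 : E × F)) := by
    have := (continuousAt_id (x := (0 : E))).prodMk hu.continuousAt
    simpa [ContinuousAt, hu0] using! this
  have hbound : ∀ᶠ z in 𝓝 (0 : E × F), ‖fderiv ℝ η z‖ < ‖fderiv ℝ η 0‖ + 1 :=
    hη.fderiv.continuousAt.norm.eventually_lt_const (lt_add_one _)
  obtain ⟨ρ, hρ, hball⟩ := Metric.eventually_nhds_iff.1 (hu.eventually_analyticAt.and
    ((hgraph.eventually ((hη.eventually_analyticAt.and hsymm).and hbound)).and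
      hrad.eventually_nhds))
  set A : E → E →L[ℝ] F := fun q => fderiv ℝ u q - η (q, u q) with hA
  have hAderiv : ∀ q, ‖q‖ < ρ → HasFDerivAt A (fderiv ℝ (fderiv ℝ u) q -
      fderiv ℝ η (q, u q) ∘L (ContinuousLinearMap.id ℝ E).prod (fderiv ℝ u q)) q := by
    intro q hq
    obtain ⟨hua, ⟨⟨hηa, -⟩, -⟩, -⟩ := hball (by simpa using hq)
    refine hua.fderiv.differentiableAt.hasFDerivAt.sub ?_
    exact HasFDerivAt.comp (g := η) q hηa.differentiableAt.hasFDerivAt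
      ((hasFDerivAt_id q).prodMk hua.differentiableAt.hasFDerivAt)
  have hAradial : ∀ q, ‖q‖ < ρ → ∀ v, A q v + fderiv ℝ A q q v =
      fderiv ℝ η (q, u q) (0, A q v) q := by
    intro q hq v
    obtain ⟨hua, ⟨⟨hηa, hs⟩, -⟩, hr⟩ := hball (by simpa using hq)
    have hz : HasFDerivAt (fun q => A q q) (0 : E →L[ℝ] F) q := by
      refine (hasFDerivAt_const (0 : F) q).congr_of_eventuallyEq ?_
      filter_upwards [hr] with y hy
      simp [hA, hy]
    have hz' := (hAderiv q hq).clm_apply (hasFDerivAt_id q)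
    have h0 := congrArg (· v) (hz'.unique hz)
    have hsym : fderiv ℝ (fderiv ℝ u) q q v = fderiv ℝ (fderiv ℝ u) q v q :=
      (hua.contDiffAt (n := ω)).isSymmSndFDerivAt_of_omega q v
    have hcompat := hs q v
    have hsplit : fderiv ℝ η (q, u q) (0, A q v) q =
        fderiv ℝ η (q, u q) (v, fderiv ℝ u q v) q - fderiv ℝ η (q, u q) (v, η (q, u q) v) q := by
      rw [← sub_apply, ← map_sub]
      simp [hA]
    rw [hsplit, (hAderiv q hq).fderiv]
    simp at h0 ⊢
    rw [hr.self_of_nhds, hcompat, hsym]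
    rw [← sub_eq_zero, ← h0]
    abel
  filter_upwards [Metric.ball_mem_nhds (0 : E) hρ] with q hq
  rw [mem_ball_zero_iff] at hq
  have hsmul : ∀ t ∈ I, ‖t • q‖ < ρ := by
    intro t ht
    refine lt_of_le_of_lt ?_ hq
    rw [norm_smul, Real.norm_of_nonneg ht.1]
    exact mul_le_of_le_one_left (norm_nonneg _) ht.2
  ext v
  have hb : ∀ t ∈ I, HasDerivAt (fun t : ℝ => t • A (t • q) v)
      (fderiv ℝ η (t • q, u (t • q)) (0, t • A (t • q) v) q) t := by
    intro t ht
    have hl : HasDerivAt (fun t : ℝ => t • q) q t := by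
      simpa using (hasDerivAt_id t).smul_const q
    have hAd := (hAderiv _ (hsmul t ht)).differentiableAt.hasFDerivAt.comp_hasDerivAt t hl
    have h1 := (hasDerivAt_id t).smul (hAd.clm_apply (hasDerivAt_const t v))
    have h2 := hAradial _ (hsmul t ht) v
    have h3 : fderiv ℝ η (t • q, u (t • q)) (0, t • A (t • q) v) q
        = A (t • q) v + t • fderiv ℝ A (t • q) q v := by
      have : ((0 : E), t • A (t • q) v) = t • ((0 : E), A (t • q) v) := by simp
      rw [this, map_smul, smul_apply, ← map_smul, ← h2]
      simp
    rw [h3]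
    simpa [add_comm] using! h1
  have hzero := eq_zero_of_abs_deriv_le_mul_abs_self_of_eq_zero_right
    (f := fun t : ℝ => t • A (t • q) v) (a := 0) (b := 1)
    (K := (‖fderiv ℝ η 0‖ + 1) * ‖q‖)
    (fun t ht => (hb t ht).continuousAt.continuousWithinAt)
    (fun t ht => (hb t (Ico_subset_Icc_self ht)).hasDerivWithinAt) (by simp)
    (fun t ht => by
      obtain ⟨-, ⟨-, hM⟩, -⟩ := hball (by simpa using hsmul t (Ico_subset_Icc_self ht))
      refine (ContinuousLinearMap.le_opNorm _ _).trans ?_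
      calc _ ≤ ((‖fderiv ℝ η 0‖ + 1) * ‖((0 : E), t • A (t • q) v)‖) * ‖q‖ := by
            gcongr
            exact ContinuousLinearMap.le_of_opNorm_le _ hM.le _
        _ = _ := by
            rw [Prod.norm_mk, norm_zero, max_eq_right (norm_nonneg _)]
            ring) 1 (right_mem_Icc.2 zero_le_one)
  simpa [hA, sub_eq_zero] using hzero

variable [CompleteSpace E]

/-- Analytic dependence on `q` of the solution of the ray equation
`c' t = η (t • q, c t) q`, `c 0 = 0`, in integral form. -/
theorem exists_analyticAt_raySolution {η : E × F → E →L[ℝ] F} (hη : AnalyticAt ℝ η 0) :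
    ∃ ψ : E → C(I, F), AnalyticAt ℝ ψ 0 ∧ ψ 0 = 0 ∧
      ∀ᶠ w in 𝓝 (0 : E × C(I, F)),
        (∀ t : I, w.2 t = ∫ s in (0 : ℝ)..t,
          IccExtend zero_le_one (fun s : I => η ((s : ℝ) • w.1, w.2 s) w.1) s) ↔ ψ w.1 = w.2 := by
  have hΩ : AnalyticAt ℝ (fun z : E × E × F => η z.2 z.1) 0 := by
    have h : AnalyticAt ℝ (fun z : E × E × F => η z.2) 0 :=
      AnalyticAt.fun_comp (g := η) (f := fun z : E × E × F => z.2) hη analyticAt_snd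
    exact (ContinuousLinearMap.apply ℝ F (E := E)).flip.analyticAt_bilinear _ |>.fun_comp
      (h.prod analyticAt_fst)
  obtain ⟨N, hN, hNeq⟩ := hΩ.exists_analyticAt_superposition (X := I)
  let Φ : E × C(I, F) → C(I, F) := fun w => w.2 - primitiveCLM (N (rayCLM w))
  have hL : Tendsto (rayCLM (E := E) (F := F)) (𝓝 0) (𝓝 0) := by
    simpa using (rayCLM (E := E) (F := F)).continuous.tendsto 0
  have hΦan : AnalyticAt ℝ Φ 0 := by
    have hNL : AnalyticAt ℝ (fun w : E × C(I, F) => N (rayCLM w)) 0 :=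
      AnalyticAt.fun_comp (g := N) (by simpa using hN) ((rayCLM (E := E) (F := F)).analyticAt _)
    exact analyticAt_snd.sub ((primitiveCLM (F := F)).analyticAt _ |>.fun_comp hNL)
  have hΦeq : ∀ᶠ w in 𝓝 (0 : E × C(I, F)), ∀ t, Φ w t = w.2 t - ∫ s in (0 : ℝ)..t,
      IccExtend zero_le_one (fun s : I => η ((s : ℝ) • w.1, w.2 s) w.1) s := by
    filter_upwards [hL.eventually hNeq] with w hw t
    have hfun : ⇑(N (rayCLM w)) = fun s : I => η ((s : ℝ) • w.1, w.2 s) w.1 := funext hw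
    simp only [Φ, ContinuousMap.sub_apply, primitiveCLM_apply, hfun]
  have hΦ0 : ∀ᶠ c in 𝓝 (0 : C(I, F)), Φ (0, c) = c := by
    have : Tendsto (fun c : C(I, F) => ((0 : E), c)) (𝓝 0) (𝓝 0) := by
      exact (Continuous.prodMk_right (0 : E)).tendsto (0 : C(I, F))
    filter_upwards [this.eventually hΦeq] with c hc
    ext t
    rw [hc t]
    simp [IccExtend]
  have hΦd : (fderiv ℝ Φ 0) ∘L (.inr ℝ E C(I, F)) = ContinuousLinearMap.id ℝ C(I, F) := by
    have h1 : HasFDerivAt (fun c => Φ (0, c)) ((fderiv ℝ Φ 0) ∘L (.inr ℝ E C(I, F))) 0 := by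
      refine HasFDerivAt.comp (g := Φ) (0 : C(I, F)) ?_ (ContinuousLinearMap.inr ℝ E C(I, F)).hasFDerivAt
      simpa using! hΦan.differentiableAt.hasFDerivAt
    exact h1.unique ((hasFDerivAt_id _).congr_of_eventuallyEq hΦ0)
  have hinv : ((fderiv ℝ Φ 0) ∘L (.inr ℝ E C(I, F))).IsInvertible := by
    rw [hΦd]; exact ⟨ContinuousLinearEquiv.refl ℝ _, rfl⟩
  have hcd : ContDiffAt ℝ ω Φ 0 := hΦan.contDiffAt
  have hΦ00 : Φ 0 = 0 := hΦ0.self_of_nhds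
  refine ⟨hcd.implicitFunction (by simp) hinv,
    (hcd.contDiffAt_implicitFunction (by simp) hinv).analyticAt,
    hcd.implicitFunction_apply_self (by simp) hinv, ?_⟩
  filter_upwards [hΦeq, hcd.eventually_apply_eq_iff_implicitFunction (by simp) hinv] with w h1 h2
  rw [← h2, hΦ00, ContinuousMap.ext_iff]
  simp only [h1, ContinuousMap.zero_apply, sub_eq_zero]

/-- There is an analytic germ `u` which solves
the total differential equation `du = η (q, u)` in the radial direction, and every solution of the
full equation coincides with it. -/
theorem exists_analyticAt_radialSolution {η : E × F → E →L[ℝ] F} (hη : AnalyticAt ℝ η 0) :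
    ∃ u : E → F, AnalyticAt ℝ u 0 ∧ u 0 = 0 ∧
      (∀ᶠ q in 𝓝 (0 : E), fderiv ℝ u q q = η (q, u q) q) ∧
      ∀ v : E → F, AnalyticAt ℝ v 0 → v 0 = 0 →
        (∀ᶠ q in 𝓝 (0 : E), fderiv ℝ v q = η (q, v q)) → v =ᶠ[𝓝 0] u := by
  obtain ⟨ψ, hψ, hψ0, hiff⟩ := exists_analyticAt_raySolution hη
  obtain ⟨δ₁, hδ₁, hδ₁_prop⟩ := Metric.eventually_nhds_iff.1 hiff
  obtain ⟨δ₂, hδ₂, hδ₂_prop⟩ := Metric.eventually_nhds_iff.1 hη.eventually_analyticAt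
  obtain ⟨δ, hδ, hδδ₁, hδδ₂⟩ : ∃ δ > 0, δ ≤ δ₁ ∧ δ ≤ δ₂ :=
    ⟨min δ₁ δ₂, lt_min hδ₁ hδ₂, min_le_left _ _, min_le_right _ _⟩
  have hsmul : ∀ {q : E} {r : ℝ}, ‖q‖ < r → ∀ t ∈ I, ‖t • q‖ < r := by
    intro q r hq t ht
    refine lt_of_le_of_lt ?_ hq
    rw [norm_smul, Real.norm_of_nonneg ht.1]
    exact mul_le_of_le_one_left (norm_nonneg _) ht.2
  have hcont : ∀ q (c : C(I, F)), ‖q‖ < δ → ‖c‖ < δ →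
      Continuous fun s : I => η ((s : ℝ) • q, c s) q := by
    intro q c hq hc
    refine Continuous.clm_apply (continuous_iff_continuousAt.2 fun s => ?_) continuous_const
    have : AnalyticAt ℝ η ((s : ℝ) • q, c s) := by
      refine hδ₂_prop ?_
      rw [dist_zero_right, Prod.norm_def]
      exact max_lt ((hsmul hq s s.2).trans_le hδδ₂)
        (((c.norm_coe_le_norm s).trans_lt hc).trans_le hδδ₂)
    exact ContinuousAt.comp (g := η) this.continuousAt
      (f := fun s : I => ((s : ℝ) • q, c s)) (by fun_prop)
  have hball : ∀ q c, ‖q‖ < δ → ‖c‖ < δ → ((∀ t : I, c t = ∫ s in (0 : ℝ)..t,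
      IccExtend zero_le_one (fun s : I => η ((s : ℝ) • q, c s) q) s) ↔ ψ q = c) := by
    intro q c hq hc
    refine hδ₁_prop (y := (q, c)) ?_
    rw [dist_zero_right, Prod.norm_def]
    exact max_lt (hq.trans_le hδδ₁) (hc.trans_le hδδ₁)
  let u : E → F := fun q => ψ q 1
  have hu : AnalyticAt ℝ u 0 := ((ContinuousMap.evalCLM ℝ (1 : I)).analyticAt _).fun_comp hψ
  have hq_small : ∀ᶠ q in 𝓝 (0 : E), ‖q‖ < δ := by
    simpa [Metric.ball] using! Metric.ball_mem_nhds (0 : E) hδ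
  have hψ_small : ∀ᶠ q in 𝓝 (0 : E), ‖ψ q‖ < δ := by
    have := hψ.continuousAt.norm
    rw [ContinuousAt, hψ0, norm_zero] at this
    exact this.eventually_lt_const hδ
  have hscale : ∀ q, ‖q‖ < δ → ‖ψ q‖ < δ → ∀ t : I, u ((t : ℝ) • q) = ψ q t := by
    intro q hq hc t
    let c : C(I, F) := ⟨fun s => ψ q (t * s), by fun_prop⟩
    have hcδ : ‖c‖ < δ := lt_of_le_of_lt
      ((ContinuousMap.norm_le _ (norm_nonneg _)).2 fun s => (ψ q).norm_coe_le_norm _) hc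
    have htq : ‖(t : ℝ) • q‖ < δ := hsmul hq t t.2
    have key : ψ ((t : ℝ) • q) = c := by
      refine (hball _ _ htq hcδ).1 fun s => ?_
      have h1 := (hball q _ hq hc).2 rfl (t * s)
      change ψ q (t * s) = _
      rw [h1]
      have h2 := intervalIntegral.smul_integral_comp_mul_left (a := 0) (b := (s : ℝ))
        (IccExtend zero_le_one fun s : I => η ((s : ℝ) • q, ψ q s) q) (t : ℝ)
      rw [mul_zero] at h2
      rw [show ((t * s : I) : ℝ) = t * s from rfl, ← h2, ← intervalIntegral.integral_smul]
      refine intervalIntegral.integral_congr fun r hr => ?_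
      rw [uIcc_of_le s.2.1] at hr
      have hrI : r ∈ I := ⟨hr.1, hr.2.trans s.2.2⟩
      have htr : (t : ℝ) * r ∈ I := (t * ⟨r, hrI⟩ : I).2
      simp only [IccExtend_of_mem _ _ hrI, IccExtend_of_mem _ _ htr]
      rw [map_smul, smul_smul, mul_comm r]
      rfl
    change ψ ((t : ℝ) • q) 1 = _
    rw [key]
    simp [c]
  refine ⟨u, hu, by simp [u, hψ0], ?_, ?_⟩
  · filter_upwards [hq_small, hψ_small, hu.eventually_analyticAt] with q hq hc hua
    have h1 : HasDerivWithinAt (fun t : ℝ => u (t • q)) (fderiv ℝ u q q) I 1 := by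
      have hl : HasDerivAt (fun t : ℝ => t • q) q 1 := by
        simpa using (hasDerivAt_id (1 : ℝ)).smul_const q
      have hd : HasFDerivAt u (fderiv ℝ u q) ((1 : ℝ) • q) := by
        simpa using hua.differentiableAt.hasFDerivAt
      exact (hd.comp_hasDerivAt (1 : ℝ) hl).hasDerivWithinAt
    have h2 : HasDerivWithinAt (fun t : ℝ => u (t • q)) (η (q, u q) q) I 1 := by
      have hk := (hcont q _ hq hc).Icc_extend' (h := zero_le_one)
      have := (intervalIntegral.integral_hasDerivAt_right (hk.intervalIntegrable 0 1)
        (hk.stronglyMeasurableAtFilter _ _) hk.continuousAt).hasDerivWithinAt (s := I)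
      rw [IccExtend_of_mem _ _ (right_mem_Icc.2 zero_le_one)] at this
      have e : ∀ t ∈ I, u (t • q) = ∫ s in (0 : ℝ)..t,
          IccExtend zero_le_one (fun s : I => η ((s : ℝ) • q, ψ q s) q) s := fun t ht =>
        (hscale q hq hc ⟨t, ht⟩).trans ((hball q _ hq hc).2 rfl ⟨t, ht⟩)
      simpa using! this.congr e (e 1 (right_mem_Icc.2 zero_le_one))
    exact (uniqueDiffOn_Icc zero_lt_one 1 (right_mem_Icc.2 zero_le_one)).eq_deriv _ h1 h2
  · intro v hv hv0 hveq
    have hv_small : ∀ᶠ q in 𝓝 (0 : E), ‖v q‖ < δ / 2 := by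
      have := hv.continuousAt.norm
      rw [ContinuousAt, hv0, norm_zero] at this
      exact this.eventually_lt_const (half_pos hδ)
    obtain ⟨ρ, hρ, hρ_prop⟩ := Metric.eventually_nhds_iff.1
      (hv_small.and (hv.eventually_analyticAt.and hveq))
    filter_upwards [hq_small, Metric.ball_mem_nhds (0 : E) hρ] with q hq hqρ
    rw [mem_ball_zero_iff] at hqρ
    have hray : ∀ t ∈ I, ‖v (t • q)‖ < δ / 2 ∧ AnalyticAt ℝ v (t • q) ∧
        fderiv ℝ v (t • q) = η (t • q, v (t • q)) := fun t ht =>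
      hρ_prop (by simpa using hsmul hqρ t ht)
    let c : C(I, F) := ⟨fun s => v ((s : ℝ) • q), continuous_iff_continuousAt.2 fun s =>
      ContinuousAt.comp (g := v) (hray s s.2).2.1.continuousAt
        (f := fun s : I => (s : ℝ) • q) (by fun_prop)⟩
    have hc : ‖c‖ < δ := lt_of_le_of_lt
      ((ContinuousMap.norm_le _ (half_pos hδ).le).2 fun s => (hray s s.2).1.le) (half_lt_self hδ)
    have key : ψ q = c := by
      refine (hball q c hq hc).1 fun t => ?_
      have hk := (hcont q c hq hc).Icc_extend' (h := zero_le_one)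
      rw [intervalIntegral.integral_eq_sub_of_hasDerivAt (f := fun s : ℝ => v (s • q)) ?_
        (hk.intervalIntegrable _ _)]
      · simp [c, hv0]
      · intro s hs
        rw [uIcc_of_le t.2.1] at hs
        have hsI : s ∈ I := ⟨hs.1, hs.2.trans t.2.2⟩
        have hl : HasDerivAt (fun t : ℝ => t • q) q s := by
          simpa using (hasDerivAt_id s).smul_const q
        rw [IccExtend_of_mem _ _ hsI]
        change HasDerivAt _ (η (s • q, v (s • q)) q) s
        rw [← (hray s hsI).2.2]
        exact (hray s hsI).2.1.differentiableAt.hasFDerivAt.comp_hasDerivAt s hl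
    simp [u, key, c]

/-- The analytic Frobenius theorem for the total differential equation `du = η (q, u)`. -/
theorem exists_analyticAt_fderiv_eq {η : E × F → E →L[ℝ] F} (hη : AnalyticAt ℝ η 0)
    (hsymm : ∀ᶠ z in 𝓝 (0 : E × F), ∀ v w,
      fderiv ℝ η z (v, η z v) w = fderiv ℝ η z (w, η z w) v) :
    ∃ u : E → F, AnalyticAt ℝ u 0 ∧ u 0 = 0 ∧
      (∀ᶠ q in 𝓝 (0 : E), fderiv ℝ u q = η (q, u q)) ∧
      ∀ v : E → F, AnalyticAt ℝ v 0 → v 0 = 0 →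
        (∀ᶠ q in 𝓝 (0 : E), fderiv ℝ v q = η (q, v q)) → v =ᶠ[𝓝 0] u := by
  obtain ⟨u, hu, hu0, hrad, huniq⟩ := exists_analyticAt_radialSolution hη
  exact ⟨u, hu, hu0, eventually_fderiv_eq_of_radial hη hsymm hu hu0 hrad, huniq⟩

end TotalDifferential

theorem fderiv_uncurry_apply {u : ℝ → ℝ → ℝ} {p : ℝ × ℝ}
    (hu : DifferentiableAt ℝ (fun p : ℝ × ℝ => u p.1 p.2) p) (v : ℝ × ℝ) :
    fderiv ℝ (fun p : ℝ × ℝ => u p.1 p.2) p v = d1 u p.1 p.2 * v.1 + d2 u p.1 p.2 * v.2 := by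
  have h1 : d1 u p.1 p.2 = fderiv ℝ (fun p : ℝ × ℝ => u p.1 p.2) p (1, 0) :=
    (hu.hasFDerivAt.comp_hasDerivAt (f := fun t => (t, p.2)) p.1
      ((hasDerivAt_id p.1).prodMk (hasDerivAt_const p.1 p.2))).deriv
  have h2 : d2 u p.1 p.2 = fderiv ℝ (fun p : ℝ × ℝ => u p.1 p.2) p (0, 1) :=
    (hu.hasFDerivAt.comp_hasDerivAt (f := fun t => (p.1, t)) p.2
      ((hasDerivAt_const p.2 p.1).prodMk (hasDerivAt_id p.2))).deriv
  have hv : v = v.1 • ((1 : ℝ), (0 : ℝ)) + v.2 • ((0 : ℝ), (1 : ℝ)) := by ext <;> simp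
  conv_lhs => rw [hv]
  rw [map_add, map_smul, map_smul, h1, h2, smul_eq_mul, smul_eq_mul]
  ring

theorem fderiv_uncurry₃_apply {h : ℝ → ℝ → ℝ → ℝ} {z : (ℝ × ℝ) × ℝ}
    (hh : DifferentiableAt ℝ (fun z : (ℝ × ℝ) × ℝ => h z.1.1 z.1.2 z.2) z) (v : (ℝ × ℝ) × ℝ) :
    fderiv ℝ (fun z : (ℝ × ℝ) × ℝ => h z.1.1 z.1.2 z.2) z v =
      D1 h z.1.1 z.1.2 z.2 * v.1.1 + D2 h z.1.1 z.1.2 z.2 * v.1.2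
        + Du h z.1.1 z.1.2 z.2 * v.2 := by
  obtain ⟨⟨x, y⟩, w⟩ := z
  have h1 : D1 h x y w = fderiv ℝ (fun z : (ℝ × ℝ) × ℝ => h z.1.1 z.1.2 z.2) ((x, y), w)
      ((1, 0), 0) :=
    (hh.hasFDerivAt.comp_hasDerivAt (f := fun t => ((t, y), w)) x
      (((hasDerivAt_id x).prodMk (hasDerivAt_const x y)).prodMk (hasDerivAt_const x w))).deriv
  have h2 : D2 h x y w = fderiv ℝ (fun z : (ℝ × ℝ) × ℝ => h z.1.1 z.1.2 z.2) ((x, y), w)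
      ((0, 1), 0) :=
    (hh.hasFDerivAt.comp_hasDerivAt (f := fun t => ((x, t), w)) y
      (((hasDerivAt_const y x).prodMk (hasDerivAt_id y)).prodMk (hasDerivAt_const y w))).deriv
  have h3 : Du h x y w = fderiv ℝ (fun z : (ℝ × ℝ) × ℝ => h z.1.1 z.1.2 z.2) ((x, y), w)
      (0, 1) :=
    (hh.hasFDerivAt.comp_hasDerivAt (f := fun t => ((x, y), t)) w
      ((hasDerivAt_const w (x, y)).prodMk (hasDerivAt_id w))).deriv
  have hv : v = v.1.1 • (((1 : ℝ), (0 : ℝ)), (0 : ℝ)) + v.1.2 • (((0 : ℝ), (1 : ℝ)), (0 : ℝ))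
      + v.2 • ((0 : ℝ × ℝ), (1 : ℝ)) := by ext <;> simp
  conv_lhs => rw [hv]
  rw [map_add, map_add, map_smul, map_smul, map_smul, h1, h2, h3]
  simp only [smul_eq_mul]
  ring

theorem fderiv_uncurry_eq_iff {u : ℝ → ℝ → ℝ} {p : ℝ × ℝ} {a b : ℝ}
    (hu : DifferentiableAt ℝ (fun p : ℝ × ℝ => u p.1 p.2) p) :
    fderiv ℝ (fun p : ℝ × ℝ => u p.1 p.2) p =
        a • ContinuousLinearMap.fst ℝ ℝ ℝ + b • ContinuousLinearMap.snd ℝ ℝ ℝ ↔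
      d1 u p.1 p.2 = a ∧ d2 u p.1 p.2 = b := by
  constructor
  · intro h
    have h1 := fderiv_uncurry_apply hu (1, 0)
    have h2 := fderiv_uncurry_apply hu (0, 1)
    rw [h] at h1 h2
    exact ⟨by simpa using h1.symm, by simpa using h2.symm⟩
  · rintro ⟨rfl, rfl⟩
    ext <;> simp [fderiv_uncurry_apply hu]

/-- Frobenius-type theorem: if f, g are analytic near the origin and satisfy the
compatibility condition D₂f = D₁g with D₁ = ∂₁ + f·∂ᵤ and D₂ = ∂₂ + g·∂ᵤ, then the
system ∂₁u = f(x₁,x₂,u), ∂₂u = g(x₁,x₂,u) has a unique analytic solution near (0,0)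
with u(0,0) = 0. -/
theorem analytic_frobenius (f g : ℝ → ℝ → ℝ → ℝ)
    (hf : AnalyticAt ℝ (fun p : ℝ × ℝ × ℝ => f p.1 p.2.1 p.2.2) (0, 0, 0))
    (hg : AnalyticAt ℝ (fun p : ℝ × ℝ × ℝ => g p.1 p.2.1 p.2.2) (0, 0, 0))
    (hcomp : ∀ᶠ p : ℝ × ℝ × ℝ in nhds (0, 0, 0),
      D2 f p.1 p.2.1 p.2.2 + g p.1 p.2.1 p.2.2 * Du f p.1 p.2.1 p.2.2
        = D1 g p.1 p.2.1 p.2.2 + f p.1 p.2.1 p.2.2 * Du g p.1 p.2.1 p.2.2) :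
    ∃ u : ℝ → ℝ → ℝ,
      AnalyticAt ℝ (fun p : ℝ × ℝ => u p.1 p.2) (0, 0) ∧
      u 0 0 = 0 ∧
      (∀ᶠ p : ℝ × ℝ in nhds (0, 0),
        d1 u p.1 p.2 = f p.1 p.2 (u p.1 p.2) ∧ d2 u p.1 p.2 = g p.1 p.2 (u p.1 p.2)) ∧
      ∀ v : ℝ → ℝ → ℝ,
        AnalyticAt ℝ (fun p : ℝ × ℝ => v p.1 p.2) (0, 0) →
        v 0 0 = 0 →
        (∀ᶠ p : ℝ × ℝ in nhds (0, 0),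
          d1 v p.1 p.2 = f p.1 p.2 (v p.1 p.2) ∧ d2 v p.1 p.2 = g p.1 p.2 (v p.1 p.2)) →
        ∀ᶠ p : ℝ × ℝ in nhds (0, 0), v p.1 p.2 = u p.1 p.2 := by
  let η : (ℝ × ℝ) × ℝ → ℝ × ℝ →L[ℝ] ℝ := fun z =>
    f z.1.1 z.1.2 z.2 • ContinuousLinearMap.fst ℝ ℝ ℝ +
      g z.1.1 z.1.2 z.2 • ContinuousLinearMap.snd ℝ ℝ ℝ
  have hassoc : AnalyticAt ℝ (fun z : (ℝ × ℝ) × ℝ => (z.1.1, z.1.2, z.2)) 0 :=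
    (ContinuousLinearEquiv.prodAssoc ℝ ℝ ℝ ℝ).toContinuousLinearMap.analyticAt 0
  have hf' : AnalyticAt ℝ (fun z : (ℝ × ℝ) × ℝ => f z.1.1 z.1.2 z.2) 0 :=
    AnalyticAt.fun_comp (g := fun p : ℝ × ℝ × ℝ => f p.1 p.2.1 p.2.2)
      (f := fun z : (ℝ × ℝ) × ℝ => (z.1.1, z.1.2, z.2)) hf hassoc
  have hg' : AnalyticAt ℝ (fun z : (ℝ × ℝ) × ℝ => g z.1.1 z.1.2 z.2) 0 :=
    AnalyticAt.fun_comp (g := fun p : ℝ × ℝ × ℝ => g p.1 p.2.1 p.2.2)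
      (f := fun z : (ℝ × ℝ) × ℝ => (z.1.1, z.1.2, z.2)) hg hassoc
  have hη : AnalyticAt ℝ η 0 :=
    (hf'.fun_smul analyticAt_const).add (hg'.fun_smul analyticAt_const)
  have hsymm : ∀ᶠ z in 𝓝 (0 : (ℝ × ℝ) × ℝ), ∀ v w,
      fderiv ℝ η z (v, η z v) w = fderiv ℝ η z (w, η z w) v := by
    filter_upwards [hassoc.continuousAt.eventually hcomp, hf'.eventually_analyticAt,
      hg'.eventually_analyticAt] with z hz hfz hgz v w
    have hd : HasFDerivAt η _ z :=
      (hfz.differentiableAt.hasFDerivAt.smul_const (ContinuousLinearMap.fst ℝ ℝ ℝ)).add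
        (hgz.differentiableAt.hasFDerivAt.smul_const (ContinuousLinearMap.snd ℝ ℝ ℝ))
    rw [hd.fderiv]
    simp [fderiv_uncurry₃_apply hfz.differentiableAt, fderiv_uncurry₃_apply hgz.differentiableAt, η]
    linear_combination (v.2 * w.1 - v.1 * w.2) * hz
  obtain ⟨u, hu, hu0, hueq, huniq⟩ := exists_analyticAt_fderiv_eq hη hsymm
  refine ⟨fun x y => u (x, y), hu, hu0, ?_, ?_⟩
  · filter_upwards [hueq, hu.eventually_analyticAt] with p hp hpa
    exact (fderiv_uncurry_eq_iff (u := fun x y => u (x, y)) hpa.differentiableAt).1 hp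
  · intro v hv hv0 hveq
    refine huniq (fun p => v p.1 p.2) hv hv0 ?_
    filter_upwards [hveq, hv.eventually_analyticAt] with p hp hpa
    exact (fderiv_uncurry_eq_iff hpa.differentiableAt).2 hp
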